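/- Define the ℤ-linear map φ : Λ → Λ̃ by φ(H_x) = H_g, φ(H_y) = H_f + 2H_g − E₃ − E₄ − E₅ − E₆, φ(F₁) = E₁, φ(F₂) = E₂, φ(F₃) = H_g − E₆, φ(F₄) = H_g − E₅, φ(F₅) = H_g − E₄, φ(F₆) = H_g − E₃, φ(F₇) = E₇, φ(F₈) = E₈. Then: (i) φ preserves the intersection forms, i.e. φ(u)·φ(v) = u·v for all u, v ∈ Λ; (ii) φ is bijective with inverse determined by H_f ↦ 2H_x + H_y − F₃ − F₄ − F₅ − F₆, H_g ↦ H_x, E₁ ↦ F₁, E₂ ↦ F₂, E₃ ↦ H_x − F₆, E₄ ↦ H_x − F₅, E₅ ↦ H_x − F₄, E₆ ↦ H_x − F₃, E₇ ↦ F₇, E₈ ↦ F₈; (iii) φ maps the surface roots δ₀ = F₅−F₆, δ₁ = 2H_x+H_y−F₁−F₂−F₃−F₄−F₅−F₆, δ₂ = F₆−F₇, δ₃ = F₇−F₈, δ₄ = H_y−F₅−F₆ respectively to δ̃₀ = E₃−E₄, δ̃₁ = H_f−E₁−E₂, δ̃₂ = H_g−E₃−E₇, δ̃₃ = E₇−E₈,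 δ̃₄ = H_f−E₅−E₆. -/

import Mathlib

/-- The standard basis vectors of a copy of `ℤ¹⁰`.
For `Λ` the basis is `(H_x, H_y, F₁, …, F₈) = (latB 0, latB 1, latB 2, …, latB 9)`;
for `Λ̃` the basis is `(H_f, H_g, E₁, …, E₈) = (latB 0, latB 1, latB 2, …, latB 9)`. -/
def latB (i : Fin 10) : Fin 10 → ℤ := Pi.single i 1

/-- The intersection form: the two H-vectors have self-pairing 0 and mutual pairing 1,
H-vectors pair to 0 with the remaining basis vectors, and `Fᵢ·Fⱼ = −δᵢⱼ`. -/
def latIP (u v : Fin 10 → ℤ) : ℤ :=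
  u 0 * v 1 + u 1 * v 0 - ∑ i : Fin 10, (if 2 ≤ (i : ℕ) then u i * v i else 0)

/-!
Identify `Λ` with `Λ̃` through the order of their bases. Then `φ` is the product of the reflections
in three roots (vectors of self-pairing `-2`): first the reflection in `H_f - H_g`, which swaps the
two rulings, then the reflections in the orthogonal roots `H_g - E₄ - E₅` and `H_g - E₃ - E₆`, which
exchange `E₄ ↔ H_g - E₅` and `E₃ ↔ H_g - E₆`. Reflections in roots are isometric involutions, so `φ`
is an isometry whose inverse is the product of the same reflections in the opposite order.
-/

section RootReflection

variable {R M : Type*} [CommRing R] [AddCommGroup M] [Module R M] (B : LinearMap.BilinForm R M)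

/-- The reflection `x ↦ x + B(α, x) α` in a vector `α`. It is meant for roots in the sign convention
of intersection forms, `B(α, α) = -2`, but it is a linear map for every `α`. -/
def rootReflection (α : M) : Module.End R M :=
  Module.preReflection α (-B α)

theorem rootReflection_apply (α x : M) : rootReflection B α x = x + B α x • α := by
  simp [rootReflection, Module.preReflection_apply]

variable {B}

theorem rootReflection_involutive {α : M} (hα : B α α = -2) :
    Function.Involutive (rootReflection B α) :=
  Module.involutive_preReflection (by simp [hα])

theorem rootReflection_isOrthogonal (hB : B.IsSymm) {α : M} (hα : B α α = -2) :
    B.IsOrthogonal (rootReflection B α) := by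
  intro x y
  simp only [rootReflection_apply, map_add, map_smul, LinearMap.add_apply, LinearMap.smul_apply,
    smul_eq_mul, hα, hB.eq x α]
  ring

end RootReflection

theorem latB_apply (i k : Fin 10) : latB i k = if k = i then 1 else 0 :=
  Pi.single_apply i 1 k

theorem latIP_comm (u v : Fin 10 → ℤ) : latIP u v = latIP v u := by
  simp only [latIP, mul_comm, add_comm]

theorem latIP_add_left (u u' v : Fin 10 → ℤ) : latIP (u + u') v = latIP u v + latIP u' v := by
  simp only [latIP, Pi.add_apply, add_mul, ite_add_zero, Finset.sum_add_distrib]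
  ring

theorem latIP_smul_left (c : ℤ) (u v : Fin 10 → ℤ) : latIP (c • u) v = c • latIP u v := by
  simp only [latIP, Pi.smul_apply, smul_eq_mul, mul_sub, mul_add, Finset.mul_sum, mul_ite, mul_zero,
    mul_assoc]

/-- The intersection form `latIP` as a bundled bilinear form. -/
def latForm : LinearMap.BilinForm ℤ (Fin 10 → ℤ) :=
  LinearMap.mk₂ ℤ latIP latIP_add_left latIP_smul_left
    (fun u v v' => by simp only [latIP_comm u, latIP_add_left])
    (fun c u v => by simp only [latIP_comm u, latIP_smul_left])

theorem latForm_apply (u v : Fin 10 → ℤ) : latForm u v = latIP u v := rfl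

theorem latForm_isSymm : latForm.IsSymm := ⟨latIP_comm⟩

theorem latForm_latB_zero (v : Fin 10 → ℤ) : latForm (latB 0) v = v 1 := by
  simp [latForm_apply, latIP, latB_apply, Fin.sum_univ_succ]

theorem latForm_latB_one (v : Fin 10 → ℤ) : latForm (latB 1) v = v 0 := by
  simp [latForm_apply, latIP, latB_apply, Fin.sum_univ_succ]

theorem latForm_latB_of_two_le {i : Fin 10} (hi : 2 ≤ i) (v : Fin 10 → ℤ) :
    latForm (latB i) v = -v i := by
  have latB_zero : latB i 0 = 0 := by grind [latB_apply]
  have latB_one : latB i 1 = 0 := by grind [latB_apply]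
  have term (k : Fin 10) :
      (if 2 ≤ (k : ℕ) then latB i k * v k else 0) = if k = i then v k else 0 := by
    grind [latB_apply]
  simp [latForm_apply, latIP, latB_zero, latB_one, term]

theorem linearMap_ext_latB {M : Type*} [AddCommGroup M] {f g : (Fin 10 → ℤ) →ₗ[ℤ] M}
    (h : ∀ i, f (latB i) = g (latB i)) : f = g :=
  (Pi.basisFun ℤ (Fin 10)).ext fun i => by simpa only [Pi.basisFun_apply, latB] using h i

section RulingRoot

/-- The class `H_f - H_g`, a root whose reflection swaps the two rulings. -/
def rulingRoot : Fin 10 → ℤ := latB 0 - latB 1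

theorem latForm_rulingRoot (v : Fin 10 → ℤ) : latForm rulingRoot v = v 1 - v 0 := by
  simp only [rulingRoot, map_sub, LinearMap.sub_apply, latForm_latB_zero, latForm_latB_one]

theorem latForm_rulingRoot_self : latForm rulingRoot rulingRoot = -2 := by
  rw [latForm_rulingRoot]
  simp [rulingRoot, latB_apply]

@[simp]
theorem rootReflection_rulingRoot_latB_zero :
    rootReflection latForm rulingRoot (latB 0) = latB 1 := by
  have pairing : latForm rulingRoot (latB 0) = -1 := by simp [latForm_rulingRoot, latB_apply]
  rw [rootReflection_apply, pairing, rulingRoot]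
  abel

@[simp]
theorem rootReflection_rulingRoot_latB_one :
    rootReflection latForm rulingRoot (latB 1) = latB 0 := by
  have pairing : latForm rulingRoot (latB 1) = 1 := by simp [latForm_rulingRoot, latB_apply]
  rw [rootReflection_apply, pairing, rulingRoot]
  abel

@[simp]
theorem rootReflection_rulingRoot_latB_of_two_le {k : Fin 10} (hk : 2 ≤ k) :
    rootReflection latForm rulingRoot (latB k) = latB k := by
  have pairing : latForm rulingRoot (latB k) = 0 := by grind [latForm_rulingRoot, latB_apply]
  rw [rootReflection_apply, pairing, zero_smul, add_zero]

end RulingRoot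

section FiberRoot

/-- The class of a curve in the ruling `H_g` through two blown-up points with exceptional classes
`latB i` and `latB j`; its reflection performs elementary transformations at both points. It is a
root when `i` and `j` are distinct and at least `2`, and `latB i` is the paper's `Eᵢ₋₁`. -/
def fiberRoot (i j : Fin 10) : Fin 10 → ℤ := latB 1 - latB i - latB j

variable {i j : Fin 10}

theorem latForm_fiberRoot (hi : 2 ≤ i) (hj : 2 ≤ j) (v : Fin 10 → ℤ) :
    latForm (fiberRoot i j) v = v 0 + v i + v j := by
  simp only [fiberRoot, map_sub, LinearMap.sub_apply, latForm_latB_one, latForm_latB_of_two_le hi,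
    latForm_latB_of_two_le hj, sub_neg_eq_add]

theorem latForm_fiberRoot_self (hi : 2 ≤ i) (hj : 2 ≤ j) (hij : i ≠ j) :
    latForm (fiberRoot i j) (fiberRoot i j) = -2 := by
  rw [latForm_fiberRoot hi hj]
  simp only [fiberRoot, Pi.sub_apply, latB_apply]
  grind

@[simp]
theorem rootReflection_fiberRoot_latB_zero (hi : 2 ≤ i) (hj : 2 ≤ j) :
    rootReflection latForm (fiberRoot i j) (latB 0) = latB 0 + latB 1 - latB i - latB j := by
  have pairing : latForm (fiberRoot i j) (latB 0) = 1 := by grind [latForm_fiberRoot, latB_apply]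
  rw [rootReflection_apply, pairing, fiberRoot]
  abel

@[simp]
theorem rootReflection_fiberRoot_latB_left (hi : 2 ≤ i) (hj : 2 ≤ j) (hij : i ≠ j) :
    rootReflection latForm (fiberRoot i j) (latB i) = latB 1 - latB j := by
  have pairing : latForm (fiberRoot i j) (latB i) = 1 := by grind [latForm_fiberRoot, latB_apply]
  rw [rootReflection_apply, pairing, fiberRoot]
  abel

@[simp]
theorem rootReflection_fiberRoot_latB_right (hi : 2 ≤ i) (hj : 2 ≤ j) (hij : i ≠ j) :
    rootReflection latForm (fiberRoot i j) (latB j) = latB 1 - latB i := by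
  have pairing : latForm (fiberRoot i j) (latB j) = 1 := by grind [latForm_fiberRoot, latB_apply]
  rw [rootReflection_apply, pairing, fiberRoot]
  abel

@[simp]
theorem rootReflection_fiberRoot_latB_of_ne (hi : 2 ≤ i) (hj : 2 ≤ j) {k : Fin 10} (hk0 : k ≠ 0)
    (hki : k ≠ i) (hkj : k ≠ j) :
    rootReflection latForm (fiberRoot i j) (latB k) = latB k := by
  have pairing : latForm (fiberRoot i j) (latB k) = 0 := by grind [latForm_fiberRoot, latB_apply]
  rw [rootReflection_apply, pairing, zero_smul, add_zero]

end FiberRoot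

section PicardMap

/-- The product of root reflections that realises `φ`. -/
def picardMap : Module.End ℤ (Fin 10 → ℤ) :=
  rootReflection latForm (fiberRoot 4 7) ∘ₗ rootReflection latForm (fiberRoot 5 6) ∘ₗ
    rootReflection latForm rulingRoot

/-- The reflections of `picardMap` in the opposite order, realising the inverse `ψ`. -/
def picardMapInv : Module.End ℤ (Fin 10 → ℤ) :=
  rootReflection latForm rulingRoot ∘ₗ rootReflection latForm (fiberRoot 5 6) ∘ₗ
    rootReflection latForm (fiberRoot 4 7)

theorem latForm_fiberRoot_four_seven_self : latForm (fiberRoot 4 7) (fiberRoot 4 7) = -2 :=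
  latForm_fiberRoot_self (by decide) (by decide) (by decide)

theorem latForm_fiberRoot_five_six_self : latForm (fiberRoot 5 6) (fiberRoot 5 6) = -2 :=
  latForm_fiberRoot_self (by decide) (by decide) (by decide)

theorem picardMap_isOrthogonal : latForm.IsOrthogonal picardMap := fun u v => by
  simp only [picardMap, LinearMap.comp_apply]
  rw [rootReflection_isOrthogonal latForm_isSymm latForm_fiberRoot_four_seven_self,
    rootReflection_isOrthogonal latForm_isSymm latForm_fiberRoot_five_six_self,
    rootReflection_isOrthogonal latForm_isSymm latForm_rulingRoot_self]

theorem picardMapInv_leftInverse : Function.LeftInverse picardMapInv picardMap := fun u => by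
  simp only [picardMap, picardMapInv, LinearMap.comp_apply]
  rw [rootReflection_involutive latForm_fiberRoot_four_seven_self,
    rootReflection_involutive latForm_fiberRoot_five_six_self,
    rootReflection_involutive latForm_rulingRoot_self]

theorem picardMapInv_rightInverse : Function.RightInverse picardMapInv picardMap := fun u => by
  simp only [picardMap, picardMapInv, LinearMap.comp_apply]
  rw [rootReflection_involutive latForm_rulingRoot_self,
    rootReflection_involutive latForm_fiberRoot_five_six_self,
    rootReflection_involutive latForm_fiberRoot_four_seven_self]

theorem picardMap_latB_one :
    picardMap (latB 1) = latB 0 + 2 • latB 1 - latB 4 - latB 5 - latB 6 - latB 7 := by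
  have reflected_five_six : rootReflection latForm (fiberRoot 5 6) (latB 0) =
      latB 0 + latB 1 - latB 5 - latB 6 := by simp
  have reflected_four_seven :
      rootReflection latForm (fiberRoot 4 7) (latB 0 + latB 1 - latB 5 - latB 6) =
        latB 0 + latB 1 - latB 4 - latB 7 + latB 1 - latB 5 - latB 6 := by simp
  rw [picardMap, LinearMap.comp_apply, LinearMap.comp_apply, rootReflection_rulingRoot_latB_one,
    reflected_five_six, reflected_four_seven]
  abel

theorem picardMap_latB (i : Fin 10) : picardMap (latB i) =
    ![latB 1, latB 0 + 2 • latB 1 - latB 4 - latB 5 - latB 6 - latB 7, latB 2, latB 3,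
      latB 1 - latB 7, latB 1 - latB 6, latB 1 - latB 5, latB 1 - latB 4, latB 8, latB 9] i := by
  fin_cases i
  · simp [picardMap]
  · exact picardMap_latB_one
  all_goals simp [picardMap]

theorem picardMapInv_latB_zero :
    picardMapInv (latB 0) = 2 • latB 0 + latB 1 - latB 4 - latB 5 - latB 6 - latB 7 := by
  have reflected_four_seven : rootReflection latForm (fiberRoot 4 7) (latB 0) =
      latB 0 + latB 1 - latB 4 - latB 7 := by simp
  have reflected_five_six :
      rootReflection latForm (fiberRoot 5 6) (latB 0 + latB 1 - latB 4 - latB 7) =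
        latB 0 + latB 1 - latB 5 - latB 6 + latB 1 - latB 4 - latB 7 := by simp
  have reflected_ruling : rootReflection latForm rulingRoot
      (latB 0 + latB 1 - latB 5 - latB 6 + latB 1 - latB 4 - latB 7) =
        latB 1 + latB 0 - latB 5 - latB 6 + latB 0 - latB 4 - latB 7 := by simp
  rw [picardMapInv, LinearMap.comp_apply, LinearMap.comp_apply, reflected_four_seven,
    reflected_five_six, reflected_ruling]
  abel

theorem picardMapInv_latB (i : Fin 10) : picardMapInv (latB i) =
    ![2 • latB 0 + latB 1 - latB 4 - latB 5 - latB 6 - latB 7, latB 0, latB 2, latB 3,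
      latB 0 - latB 7, latB 0 - latB 6, latB 0 - latB 5, latB 0 - latB 4, latB 8, latB 9] i := by
  fin_cases i
  · exact picardMapInv_latB_zero
  all_goals simp [picardMapInv]

end PicardMap

/-- The identification of the Picard lattices for the hypergeometric weight
(`D₄⁽¹⁾`-surfaces): `φ` preserves the intersection form, is bijective with the given
inverse `ψ`, and matches the surface root bases. -/
theorem stmt_6 (φ ψ : (Fin 10 → ℤ) →ₗ[ℤ] (Fin 10 → ℤ))
    -- φ(H_x) = H_g
    (hφ0 : φ (latB 0) = latB 1)
    -- φ(H_y) = H_f + 2H_g − E₃ − E₄ − E₅ − E₆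
    (hφ1 : φ (latB 1) = latB 0 + 2 • latB 1 - latB 4 - latB 5 - latB 6 - latB 7)
    -- φ(F₁) = E₁, φ(F₂) = E₂
    (hφ2 : φ (latB 2) = latB 2)
    (hφ3 : φ (latB 3) = latB 3)
    -- φ(F₃) = H_g − E₆
    (hφ4 : φ (latB 4) = latB 1 - latB 7)
    -- φ(F₄) = H_g − E₅
    (hφ5 : φ (latB 5) = latB 1 - latB 6)
    -- φ(F₅) = H_g − E₄
    (hφ6 : φ (latB 6) = latB 1 - latB 5)
    -- φ(F₆) = H_g − E₃
    (hφ7 : φ (latB 7) = latB 1 - latB 4)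
    -- φ(F₇) = E₇, φ(F₈) = E₈
    (hφ8 : φ (latB 8) = latB 8)
    (hφ9 : φ (latB 9) = latB 9)
    -- ψ(H_f) = 2H_x + H_y − F₃ − F₄ − F₅ − F₆
    (hψ0 : ψ (latB 0) = 2 • latB 0 + latB 1 - latB 4 - latB 5 - latB 6 - latB 7)
    -- ψ(H_g) = H_x
    (hψ1 : ψ (latB 1) = latB 0)
    -- ψ(E₁) = F₁, ψ(E₂) = F₂
    (hψ2 : ψ (latB 2) = latB 2)
    (hψ3 : ψ (latB 3) = latB 3)
    -- ψ(E₃) = H_x − F₆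
    (hψ4 : ψ (latB 4) = latB 0 - latB 7)
    -- ψ(E₄) = H_x − F₅
    (hψ5 : ψ (latB 5) = latB 0 - latB 6)
    -- ψ(E₅) = H_x − F₄
    (hψ6 : ψ (latB 6) = latB 0 - latB 5)
    -- ψ(E₆) = H_x − F₃
    (hψ7 : ψ (latB 7) = latB 0 - latB 4)
    -- ψ(E₇) = F₇, ψ(E₈) = F₈
    (hψ8 : ψ (latB 8) = latB 8)
    (hψ9 : ψ (latB 9) = latB 9) :
    -- (i) φ preserves the intersection forms
    (∀ u v, latIP (φ u) (φ v) = latIP u v) ∧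
    -- (ii) φ is bijective with inverse ψ
    Function.Bijective φ ∧
    (∀ u, ψ (φ u) = u) ∧ (∀ u, φ (ψ u) = u) ∧
    -- (iii) φ maps the surface roots δᵢ to δ̃ᵢ
    -- δ₀ = F₅−F₆ ↦ δ̃₀ = E₃−E₄
    φ (latB 6 - latB 7) = latB 4 - latB 5 ∧
    -- δ₁ = 2H_x+H_y−F₁−F₂−F₃−F₄−F₅−F₆ ↦ δ̃₁ = H_f−E₁−E₂
    φ (2 • latB 0 + latB 1 - latB 2 - latB 3 - latB 4 - latB 5 - latB 6 - latB 7)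
      = latB 0 - latB 2 - latB 3 ∧
    -- δ₂ = F₆−F₇ ↦ δ̃₂ = H_g−E₃−E₇
    φ (latB 7 - latB 8) = latB 1 - latB 4 - latB 8 ∧
    -- δ₃ = F₇−F₈ ↦ δ̃₃ = E₇−E₈
    φ (latB 8 - latB 9) = latB 8 - latB 9 ∧
    -- δ₄ = H_y−F₅−F₆ ↦ δ̃₄ = H_f−E₅−E₆
    φ (latB 1 - latB 6 - latB 7) = latB 0 - latB 6 - latB 7 := by
  have hφ : φ = picardMap := linearMap_ext_latB fun i => by
    rw [picardMap_latB]; fin_cases i <;> assumption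
  have hψ : ψ = picardMapInv := linearMap_ext_latB fun i => by
    rw [picardMapInv_latB]; fin_cases i <;> assumption
  have hψφ : Function.LeftInverse ψ φ := by rw [hφ, hψ]; exact picardMapInv_leftInverse
  have hφψ : Function.RightInverse ψ φ := by rw [hφ, hψ]; exact picardMapInv_rightInverse
  have hφ_isometry : latForm.IsOrthogonal φ := hφ ▸ picardMap_isOrthogonal
  refine ⟨hφ_isometry, ⟨hψφ.injective, hφψ.surjective⟩, hψφ, hφψ, ?_, ?_, ?_, ?_, ?_⟩
  · rw [map_sub, hφ6, hφ7]; abel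
  · simp only [map_add, map_sub, map_nsmul, hφ0, hφ1, hφ2, hφ3, hφ4, hφ5, hφ6, hφ7]; abel
  · rw [map_sub, hφ7, hφ8]
  · rw [map_sub, hφ8, hφ9]
  · rw [map_sub, map_sub, hφ1, hφ6, hφ7]; abel
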